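/- Let (X, ρ) be a complete metric space, let m ∈ ℕ with m ≥ 3, and let ψ : X → X satisfy ρ(ψ^m x, ψ^m y) ≤ α(ρ(x, ψy) + ρ(y, ψx)) for all x, y ∈ X, for some α ∈ [0, 1/2) (no continuity assumption). Then there exists a point x* ∈ X such that for every initial point x ∈ X the iterative sequence (ψⁿx) converges to x*, and every fixed point of ψ equals x* (i.e. Fix(ψ) ⊆ {x*}). -/

import Mathlib

/-!
The consecutive distances `c n = dist (ψⁿ x) (ψⁿ⁺¹ x)` satisfy `c (n + m) ≤ α (c n + c (n + 1))`,
by the contraction inequality at `ψⁿ x, ψⁿ⁺¹ x`. Since `2α < 1`, summing over `n` shows that `c` is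
summable, so every orbit is Cauchy. If two orbits tend to `a` and `b`, letting `n → ∞` in the
contraction inequality gives `dist a b ≤ 2α dist a b`, hence `a = b`; continuity of `ψ` never
enters because only limits of orbits are compared.
-/

open Filter Finset Function
open scoped Topology

/-- Absorbing the sum of the right-hand sides into the partial sum up to `N + m` is possible because
the coefficients add up to less than `1` and no shift exceeds `m`. -/
theorem summable_of_le_sum_mul_shift {c a : ℕ → ℝ} {s : Finset ℕ} {m : ℕ}
    (hc : ∀ n, 0 ≤ c n) (ha : ∀ j ∈ s, 0 ≤ a j) (hs : ∀ j ∈ s, j ≤ m)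
    (ha_sum : ∑ j ∈ s, a j < 1) (hrec : ∀ n, c (n + m) ≤ ∑ j ∈ s, a j * c (n + j)) :
    Summable c := by
  let S : ℕ → ℝ := fun N => ∑ i ∈ range N, c i
  have S_mono : Monotone S := fun _ _ h =>
    sum_le_sum_of_subset_of_nonneg (range_mono h) fun i _ _ => hc i
  have shift_le (j : ℕ) (N : ℕ) : ∑ i ∈ range N, c (i + j) ≤ S (N + j) := by
    have hj : 0 ≤ ∑ i ∈ range j, c i := sum_nonneg fun i _ => hc i
    simp only [S, add_comm N j, sum_range_add, add_comm _ j]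
    linarith
  have tail_le (N : ℕ) : ∑ i ∈ range N, c (m + i) ≤ (∑ j ∈ s, a j) * S (N + m) := calc
    ∑ i ∈ range N, c (m + i) ≤ ∑ i ∈ range N, ∑ j ∈ s, a j * c (i + j) :=
      sum_le_sum fun i _ => add_comm i m ▸ hrec i
    _ = ∑ j ∈ s, a j * ∑ i ∈ range N, c (i + j) := by
      rw [sum_comm]
      simp only [mul_sum]
    _ ≤ ∑ j ∈ s, a j * S (N + m) := sum_le_sum fun j hj =>
      mul_le_mul_of_nonneg_left
        ((shift_le j N).trans (S_mono (Nat.add_le_add_left (hs j hj) N))) (ha j hj)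
    _ = (∑ j ∈ s, a j) * S (N + m) := (sum_mul ..).symm
  refine summable_of_sum_range_le (c := S m / (1 - ∑ j ∈ s, a j)) hc fun N => ?_
  refine (S_mono (Nat.le_add_right N m)).trans ?_
  have split : S (N + m) = S m + ∑ i ∈ range N, c (m + i) := by
    simp only [S, add_comm N m, sum_range_add]
  rw [le_div_iff₀ (sub_pos.mpr ha_sum)]
  linarith [tail_le N]

/-- The inequality defining an `m`-Chatterjea contraction with constant `α`. The bounds on `α` are
not part of the predicate; `m = 1` is Chatterjea's classical condition. -/
def ChatterjeaWith {X : Type*} [PseudoMetricSpace X] (m : ℕ) (α : ℝ) (ψ : X → X) : Prop :=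
  ∀ x y : X, dist (ψ^[m] x) (ψ^[m] y) ≤ α * (dist x (ψ y) + dist y (ψ x))

namespace ChatterjeaWith

section PseudoMetricSpace

variable {X : Type*} [PseudoMetricSpace X] {m : ℕ} {α : ℝ} {ψ : X → X}

theorem dist_iterate_add_le (h : ChatterjeaWith m α ψ) (x y : X) (n : ℕ) :
    dist (ψ^[n + m] x) (ψ^[n + m] y) ≤
      α * (dist (ψ^[n] x) (ψ^[n + 1] y) + dist (ψ^[n] y) (ψ^[n + 1] x)) := by
  simpa only [add_comm n m, iterate_add_apply ψ m n, iterate_succ_apply'] using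
    h (ψ^[n] x) (ψ^[n] y)

theorem dist_iterate_succ_le (h : ChatterjeaWith m α ψ) (hα : 0 ≤ α) (x : X) (n : ℕ) :
    dist (ψ^[n + m] x) (ψ^[n + m + 1] x) ≤
      α * (dist (ψ^[n] x) (ψ^[n + 1] x) + dist (ψ^[n + 1] x) (ψ^[n + 2] x)) := calc
  dist (ψ^[n + m] x) (ψ^[n + m + 1] x) ≤ α * dist (ψ^[n] x) (ψ^[n + 2] x) := by
    simpa only [← iterate_succ_apply, dist_self, add_zero] using h.dist_iterate_add_le x (ψ x) n
  _ ≤ _ := mul_le_mul_of_nonneg_left (dist_triangle ..) hα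

theorem cauchySeq_iterate (h : ChatterjeaWith m α ψ) (hm : m ≠ 0) (hα₀ : 0 ≤ α) (hα : α < 1 / 2)
    (x : X) : CauchySeq fun n => ψ^[n] x := by
  refine cauchySeq_of_summable_dist <|
    summable_of_le_sum_mul_shift (a := fun _ => α) (s := range 2) (m := m)
      (fun _ => dist_nonneg) (fun _ _ => hα₀) (fun j hj => ?_) ?_ fun n => ?_
  · have := mem_range.mp hj
    lia
  · rw [sum_const, card_range, two_nsmul]
    linarith
  · simpa only [sum_range_succ, sum_range_zero, zero_add, add_zero, mul_add] using
      h.dist_iterate_succ_le hα₀ x n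

theorem dist_le_of_tendsto (h : ChatterjeaWith m α ψ) {x y a b : X}
    (hx : Tendsto (fun n => ψ^[n] x) atTop (𝓝 a)) (hy : Tendsto (fun n => ψ^[n] y) atTop (𝓝 b)) :
    dist a b ≤ 2 * α * dist a b := by
  have shift {z l : X} (hz : Tendsto (fun n => ψ^[n] z) atTop (𝓝 l)) (k : ℕ) :
      Tendsto (fun n => ψ^[n + k] z) atTop (𝓝 l) := (tendsto_add_atTop_iff_nat k).mpr hz
  have limit_le : dist a b ≤ α * (dist a b + dist b a) :=
    le_of_tendsto_of_tendsto' ((shift hx m).dist (shift hy m))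
      (((hx.dist (shift hy 1)).add (hy.dist (shift hx 1))).const_mul α)
      (h.dist_iterate_add_le x y)
  rw [dist_comm b a] at limit_le
  linarith

end PseudoMetricSpace

theorem eq_of_tendsto {X : Type*} [MetricSpace X] {m : ℕ} {α : ℝ} {ψ : X → X}
    (h : ChatterjeaWith m α ψ) (hα : α < 1 / 2) {x y a b : X}
    (hx : Tendsto (fun n => ψ^[n] x) atTop (𝓝 a)) (hy : Tendsto (fun n => ψ^[n] y) atTop (𝓝 b)) :
    a = b := by
  have dist_le : dist a b ≤ 2 * α * dist a b := h.dist_le_of_tendsto hx hy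
  exact dist_le_zero.mp (by nlinarith [dist_nonneg (x := a) (y := b)])

end ChatterjeaWith

theorem stmt_13_general {X : Type*} [MetricSpace X] [CompleteSpace X] [Nonempty X]
    {m : ℕ} (hm : m ≠ 0) {ψ : X → X} {α : ℝ} (hα₀ : 0 ≤ α) (hα : α < 1 / 2)
    (h : ChatterjeaWith m α ψ) :
    ∃ a : X, (∀ x : X, Tendsto (fun n => ψ^[n] x) atTop (𝓝 a)) ∧
      ∀ y : X, IsFixedPt ψ y → y = a := by
  choose l hl using fun x => cauchySeq_tendsto_of_complete (h.cauchySeq_iterate hm hα₀ hα x)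
  let x₀ : X := Classical.arbitrary X
  refine ⟨l x₀, fun x => h.eq_of_tendsto hα (hl x) (hl x₀) ▸ hl x, fun y hy => ?_⟩
  have orbit_const : Tendsto (fun n => ψ^[n] y) atTop (𝓝 y) := by
    simpa only [iterate_fixed hy] using tendsto_const_nhds
  exact h.eq_of_tendsto hα orbit_const (hl x₀)

/-- **Corollary 3.4.** If `ψ` is an `m`-Chatterjea contraction (`m ≥ 3`) on a complete
metric space (no continuity assumption), then all iterative sequences `(ψⁿ x)` converge
to one and the same point `x*`, and `Fix(ψ) ⊆ {x*}`. -/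
theorem stmt_13 {X : Type*} [MetricSpace X] [CompleteSpace X] [Nonempty X]
    (m : ℕ) (hm : 3 ≤ m)
    (ψ : X → X) (α : ℝ) (hα0 : 0 ≤ α) (hα : α < 1 / 2)
    (hcontr : ∀ x y : X, dist (ψ^[m] x) (ψ^[m] y) ≤ α * (dist x (ψ y) + dist y (ψ x))) :
    ∃ xs : X, (∀ x : X, Filter.Tendsto (fun n => ψ^[n] x) Filter.atTop (nhds xs)) ∧
      ∀ y : X, ψ y = y → y = xs :=
  stmt_13_general (by lia) hα0 hα hcontr
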